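/- (Generalised Tarsi's Lemma) If a generalised clause-set F is minimally unsatisfiable, then δ*(F) = δ(F) ≥ 1. -/

import Mathlib

set_option linter.unusedSectionVars false
set_option linter.unusedVariables false

open scoped Classical

namespace GCLS

variable {V α : Type} [DecidableEq V] [DecidableEq α]

/-- A finite "functional" set of (variable, value) pairs, with values inside the
given domains `D`; used both for clauses and for partial assignments. -/
def FinFn (D : V → Finset α) : Type :=
  { s : Finset (V × α) // (∀ p ∈ s, p.2 ∈ D p.1) ∧
      ∀ p ∈ s, ∀ q ∈ s, p.1 = q.1 → p = q }

variable {D : V → Finset α}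

instance : DecidableEq (FinFn D) :=
  fun a b => decidable_of_iff (a.1 = b.1) Subtype.ext_iff.symm

namespace FinFn

/-- The set of variables occurring. -/
def vars (s : FinFn D) : Finset V := s.1.image Prod.fst

/-- Restriction to the pairs whose variable lies in `W`. -/
def restrictVars (s : FinFn D) (W : Finset V) : FinFn D :=
  ⟨s.1.filter (fun p => p.1 ∈ W),
   fun p hp => s.2.1 p (Finset.mem_filter.mp hp).1,
   fun p hp q hq h =>
     s.2.2 p (Finset.mem_filter.mp hp).1 q (Finset.mem_filter.mp hq).1 h⟩

/-- Removal of a set of pairs. -/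
def sdiff (s : FinFn D) (t : Finset (V × α)) : FinFn D :=
  ⟨s.1 \ t,
   fun p hp => s.2.1 p (Finset.mem_sdiff.mp hp).1,
   fun p hp q hq h =>
     s.2.2 p (Finset.mem_sdiff.mp hp).1 q (Finset.mem_sdiff.mp hq).1 h⟩

end FinFn

/-- Clauses: finite sets of literals `(v,ε)` (meaning "v ≠ ε"), at most one literal
per variable, values inside the domains. -/
abbrev Clause (D : V → Finset α) := FinFn D

/-- Partial assignments: finitely many variables get values inside their domains. -/
abbrev PAssign (D : V → Finset α) := FinFn D

/-- `φ` satisfies the literal `(v,ε)` (i.e. "v ≠ ε"): `v` is assigned a value ≠ `ε`. -/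
def SatLit (φ : PAssign D) (l : V × α) : Prop :=
  ∃ ε, (l.1, ε) ∈ φ.1 ∧ ε ≠ l.2

/-- `φ` satisfies a clause iff it satisfies some literal of it. -/
def SatClause (φ : PAssign D) (C : Clause D) : Prop :=
  ∃ l ∈ C.1, SatLit φ l

/-- The clause obtained from `C` by deleting all literals falsified by `φ`. -/
def Clause.restrict (φ : PAssign D) (C : Clause D) : Clause D :=
  FinFn.sdiff C φ.1

/-- The operation `φ * F` on multi-clause-sets: remove all clauses satisfied by `φ`
and delete all falsified literals from the remaining clauses. -/
noncomputable def applyM (φ : PAssign D) (F : Multiset (Clause D)) : Multiset (Clause D) :=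
  (F.filter (fun C => ¬ SatClause φ C)).map (Clause.restrict φ)

/-- The operation `φ * F` on clause-sets (with contraction of equal clauses). -/
noncomputable def applyF (φ : PAssign D) (F : Finset (Clause D)) : Finset (Clause D) :=
  (F.filter (fun C => ¬ SatClause φ C)).image (Clause.restrict φ)

/-- Satisfiability: some partial assignment satisfies all clauses. -/
def Sat (F : Multiset (Clause D)) : Prop :=
  ∃ φ : PAssign D, applyM φ F = 0

/-- Minimal unsatisfiability of a clause-set. -/
def MinUnsat (F : Finset (Clause D)) : Prop :=
  ¬ Sat F.val ∧ ∀ F' ⊂ F, Sat F'.val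

/-- The variables of a multi-clause-set. -/
def mvars (F : Multiset (Clause D)) : Finset V := F.toFinset.sup FinFn.vars

/-- The deficiency `δ(F) = c(F) - Σ_{v ∈ var(F)} (|D_v| - 1)`. -/
def delta (F : Multiset (Clause D)) : ℤ :=
  (Multiset.card F : ℤ) - ∑ v ∈ mvars F, ((D v).card - 1 : ℤ)

lemma powerset_toFinset_nonempty (F : Multiset (Clause D)) :
    F.powerset.toFinset.Nonempty :=
  ⟨0, by simp⟩

/-- The maximal deficiency `δ*(F) = max {δ(F') : F' ≤ F}`. -/
noncomputable def deltaStar (F : Multiset (Clause D)) : ℤ :=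
  F.powerset.toFinset.sup' (powerset_toFinset_nonempty F) delta

/-- A tight sub-multi-clause-set: `F' ≤ F` with `δ(F') = δ*(F)`. -/
noncomputable def Tight (F F' : Multiset (Clause D)) : Prop :=
  F' ≤ F ∧ delta F' = deltaStar F

/-- `F` is matching satisfiable: the clause-variable graph `B(F)` has a matching
covering all clause-nodes.  Such a matching is encoded as a multiset `P` of pairs
(clause-occurrence, variable-node), where the variable-nodes `(v,k)`,
`k < |D v| - 1`, are the copies of the variable `v`; the matching covers each
clause-occurrence exactly once (`P.map Prod.fst = F`), uses pairwise distinct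
variable-nodes, and respects adjacency in `B(F)`. -/
def MatchingSat (F : Multiset (Clause D)) : Prop :=
  ∃ P : Multiset (Clause D × (V × ℕ)),
    P.map Prod.fst = F ∧ (P.map Prod.snd).Nodup ∧
    ∀ p ∈ P, p.2.1 ∈ FinFn.vars p.1 ∧ p.2.2 < (D p.2.1).card - 1

/-- The edge between clause `C` and the copies of variable `v` is retained in
`B_φ(F)`: the literal of `C` with variable `v` is satisfied by `φ`. -/
def EdgeSat (φ : PAssign D) (C : Clause D) (v : V) : Prop :=
  ∃ ε, (v, ε) ∈ C.1 ∧ SatLit φ (v, ε)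

/-- `φ` is matching-satisfying for `F`: `B_φ(F)` has a matching covering all
clause-nodes. -/
def MatchingSatisfying (φ : PAssign D) (F : Multiset (Clause D)) : Prop :=
  ∃ P : Multiset (Clause D × (V × ℕ)),
    P.map Prod.fst = F ∧ (P.map Prod.snd).Nodup ∧
    ∀ p ∈ P, p.2.2 < (D p.2.1).card - 1 ∧ EdgeSat φ p.1 p.2.1

/-- The maximum size of a matching in `B(F)`. -/
noncomputable def nu (F : Multiset (Clause D)) : ℕ :=
  sSup { k | ∃ P : Multiset (Clause D × (V × ℕ)),
    P.map Prod.fst ≤ F ∧ (P.map Prod.snd).Nodup ∧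
    (∀ p ∈ P, p.2.1 ∈ FinFn.vars p.1 ∧ p.2.2 < (D p.2.1).card - 1) ∧
    Multiset.card P = k }

/-- The maximum size of a matching in `B_φ(F)`. -/
noncomputable def nuSub (φ : PAssign D) (F : Multiset (Clause D)) : ℕ :=
  sSup { k | ∃ P : Multiset (Clause D × (V × ℕ)),
    P.map Prod.fst ≤ F ∧ (P.map Prod.snd).Nodup ∧
    (∀ p ∈ P, p.2.2 < (D p.2.1).card - 1 ∧ EdgeSat φ p.1 p.2.1) ∧
    Multiset.card P = k }

/-- `φ` is matching-maximum for `F`. -/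
noncomputable def MatchingMaximum (φ : PAssign D) (F : Multiset (Clause D)) : Prop :=
  nuSub φ F = nu F

/-- `φ` is an autarky for `F`: every clause touched by `φ` is satisfied by `φ`. -/
def IsAutarky (φ : PAssign D) (F : Multiset (Clause D)) : Prop :=
  ∀ C ∈ F, (FinFn.vars C ∩ FinFn.vars φ).Nonempty → SatClause φ C

/-- `F` is lean: it has no non-trivial autarky. -/
def IsLean (F : Multiset (Clause D)) : Prop :=
  ¬ ∃ φ : PAssign D, IsAutarky φ F ∧ (FinFn.vars φ ∩ mvars F).Nonempty

/-- The sub-multi-clause-set of clauses touched by the variables in `W`. -/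
noncomputable def touchedBy (F : Multiset (Clause D)) (W : Finset V) : Multiset (Clause D) :=
  F.filter (fun C => (FinFn.vars C ∩ W).Nonempty)

/-- The restriction `F[W]`: keep the clauses touching `W` and delete from them all
literals whose variable is not in `W`. -/
noncomputable def restrictTo (F : Multiset (Clause D)) (W : Finset V) : Multiset (Clause D) :=
  (touchedBy F W).map (fun C => FinFn.restrictVars C W)

/-- `φ` is a matching autarky for `F`: `φ` is matching-satisfying for the
sub-multi-clause-set of clauses touched by `φ`. -/
noncomputable def IsMatchingAutarky (φ : PAssign D) (F : Multiset (Clause D)) : Prop :=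
  MatchingSatisfying φ (touchedBy F (FinFn.vars φ))

/-- `F` is matching lean: no non-trivial matching autarky. -/
noncomputable def MatchingLean (F : Multiset (Clause D)) : Prop :=
  ¬ ∃ φ : PAssign D, IsMatchingAutarky φ F ∧ (FinFn.vars φ ∩ mvars F).Nonempty

lemma surp_nonempty {F : Multiset (Clause D)} (h : (mvars F).Nonempty) :
    ((mvars F).powerset.erase ∅).Nonempty := by
  obtain ⟨v, hv⟩ := h
  refine ⟨{v}, ?_⟩
  simp [Finset.mem_erase, Finset.singleton_subset_iff, hv]

/-- The surplus `surp(F) = min {δ(F[W]) : ∅ ≠ W ⊆ var(F)}` (and `0` if `var(F) = ∅`). -/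
noncomputable def surp (F : Multiset (Clause D)) : ℤ :=
  if h : (mvars F).Nonempty then
    ((mvars F).powerset.erase ∅).inf' (surp_nonempty h)
      (fun W => delta (restrictTo F W))
  else 0

/-- The number of occurrences of the literal `l` in `F`. -/
noncomputable def litCount (F : Multiset (Clause D)) (l : V × α) : ℕ :=
  Multiset.card (F.filter (fun C => l ∈ C.1))

/-- The number of occurrences `#_v(F)` of the variable `v` in `F`. -/
noncomputable def varCount (F : Multiset (Clause D)) (v : V) : ℕ :=
  ∑ ε ∈ D v, litCount F (v, ε)

/-- The partial assignment `⟨v → ε⟩`. -/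
def single (v : V) (ε : α) (hε : ε ∈ D v) : PAssign D :=
  ⟨{(v, ε)}, by
    refine ⟨?_, ?_⟩
    · intro p hp
      rw [Finset.mem_singleton] at hp
      subst hp; exact hε
    · intro p hp q hq _
      rw [Finset.mem_singleton] at hp hq
      subst hp; subst hq; rfl⟩

/-- Composition `φ ∘ ψ` of partial assignments: domain is the union of the domains,
`ψ` taking precedence. -/
def comp (φ ψ : PAssign D) : PAssign D :=
  ⟨ψ.1 ∪ φ.1.filter (fun p => p.1 ∉ FinFn.vars ψ), by
    constructor
    · intro p hp
      rcases Finset.mem_union.mp hp with h | h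
      · exact ψ.2.1 p h
      · exact φ.2.1 p (Finset.mem_filter.mp h).1
    · intro p hp q hq hpq
      rcases Finset.mem_union.mp hp with h1 | h1 <;>
        rcases Finset.mem_union.mp hq with h2 | h2
      · exact ψ.2.2 p h1 q h2 hpq
      · exact absurd (hpq ▸ Finset.mem_image_of_mem Prod.fst h1)
          (Finset.mem_filter.mp h2).2
      · exact absurd (hpq.symm ▸ Finset.mem_image_of_mem Prod.fst h2)
          (Finset.mem_filter.mp h1).2
      · exact φ.2.2 p (Finset.mem_filter.mp h1).1 q (Finset.mem_filter.mp h2).1 hpq⟩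

/-- Two clauses clash (in some variable). -/
def Clash (C C' : Clause D) : Prop :=
  ∃ v ε ε', (v, ε) ∈ C.1 ∧ (v, ε') ∈ C'.1 ∧ ε ≠ ε'

/-- The number of variables in which two clauses clash. -/
noncomputable def clashCount (C C' : Clause D) : ℕ :=
  ((FinFn.vars C).filter
    (fun v => ∃ ε ε', (v, ε) ∈ C.1 ∧ (v, ε') ∈ C'.1 ∧ ε ≠ ε')).card

/-- Hitting clause-sets: every two distinct clauses clash. -/
def Hitting (F : Finset (Clause D)) : Prop :=
  ∀ C ∈ F, ∀ C' ∈ F, C ≠ C' → Clash C C'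

/-- Boolean clauses over the boolean variables `V × α` (one boolean variable per
generalised literal; the value `false` gives the positive boolean literal). -/
abbrev BClause (V α : Type) :=
  Clause (fun _ : V × α => (Finset.univ : Finset Bool))

/-- The direct translation of a single clause: each literal `(v,ε)` is replaced by
the positive boolean literal of the boolean variable `(v,ε)`. -/
def dirClause (C : Clause D) : BClause V α :=
  ⟨C.1.image (fun p => (p, false)), by
    constructor
    · intro p _; exact Finset.mem_univ _
    · intro p hp q hq h
      simp only [Finset.mem_image] at hp hq
      obtain ⟨a, -, rfl⟩ := hp
      obtain ⟨b, -, rfl⟩ := hq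
      exact congrArg (fun x => (x, false)) h⟩

/-- The ALO-clause for a variable `v`: the negative boolean literals of the boolean
variables `(v,ε)` for `ε ∈ D v`. -/
def aloClause (D : V → Finset α) (v : V) : BClause V α :=
  ⟨(D v).image (fun ε => ((v, ε), true)), by
    constructor
    · intro p _; exact Finset.mem_univ _
    · intro p hp q hq h
      simp only [Finset.mem_image] at hp hq
      obtain ⟨a, -, rfl⟩ := hp
      obtain ⟨b, -, rfl⟩ := hq
      exact congrArg (fun x => (x, true)) h⟩

/-- The direct translation `Γ(F)`: the translated clauses together with the
ALO-clauses for all occurring variables. -/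
noncomputable def dirTrans (F : Finset (Clause D)) : Finset (BClause V α) :=
  F.image dirClause ∪ (mvars F.val).image (aloClause D)

lemma sat_iff_total (hD : ∀ v, (D v).Nonempty) (F : Finset (Clause D)) :
    Sat F.val ↔ ∃ h : V → α, (∀ v, h v ∈ D v) ∧ ∀ C ∈ F, ∃ l ∈ C.1, h l.1 ≠ l.2 := by
  have key : ∀ φ : PAssign D, applyM φ F.val = 0 ↔ ∀ C ∈ F, SatClause φ C := by
    intro φ
    simp [applyM, Multiset.filter_eq_nil]
  unfold Sat
  simp only [key]
  constructor
  · rintro ⟨φ, hφ⟩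
    have : ∀ v, ∃ a, a ∈ D v ∧ ∀ ε, (v, ε) ∈ φ.1 → a = ε := by
      intro v
      by_cases hv : ∃ ε, (v, ε) ∈ φ.1
      · obtain ⟨ε, hε⟩ := hv
        refine ⟨ε, φ.2.1 _ hε, fun ε' h' => ?_⟩
        exact congrArg Prod.snd (φ.2.2 _ hε _ h' rfl)
      · obtain ⟨a, ha⟩ := hD v
        exact ⟨a, ha, fun ε h => absurd ⟨ε, h⟩ hv⟩
    choose h hh1 hh2 using this
    refine ⟨h, hh1, fun C hC => ?_⟩
    obtain ⟨l, hl, ε, hε, hne⟩ := hφ C hC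
    exact ⟨l, hl, by rw [hh2 _ _ hε]; exact hne⟩
  · rintro ⟨h, hh, hF⟩
    refine ⟨⟨(F.sup FinFn.vars).image (fun v => (v, h v)), ?_, ?_⟩, ?_⟩
    · intro p hp
      obtain ⟨v, -, rfl⟩ := Finset.mem_image.mp hp
      exact hh v
    · intro p hp q hq hpq
      obtain ⟨v, -, rfl⟩ := Finset.mem_image.mp hp
      obtain ⟨w, -, rfl⟩ := Finset.mem_image.mp hq
      have hvw : v = w := hpq
      rw [hvw]
    · intro C hC
      obtain ⟨l, hl, hne⟩ := hF C hC
      refine ⟨l, hl, h l.1, ?_, hne⟩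
      refine Finset.mem_image.mpr ⟨l.1, ?_, rfl⟩
      exact Finset.mem_sup.mpr ⟨C, hC, Finset.mem_image_of_mem _ hl⟩

lemma mvars_val (F : Finset (Clause D)) : mvars F.val = F.sup FinFn.vars := by
  unfold mvars
  congr 1
  ext C
  simp

lemma hall_step (hD : ∀ v, (D v).Nonempty) (F G : Finset (Clause D)) (hG : G ⊆ F)
    (hmax : ∀ H, H ⊆ F → delta H.val ≤ delta G.val) (hs : Sat G.val) : Sat F.val := by
  rw [sat_iff_total hD] at hs ⊢
  obtain ⟨h, hh, hsat⟩ := hs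
  let U := mvars G.val
  let t : {C // C ∈ F \ G} → Finset (Σ _ : V, ℕ) := fun C =>
    (FinFn.vars C.1 \ U).sigma (fun v => Finset.range ((D v).card - 1))
  have hall : ∀ s : Finset {C // C ∈ F \ G}, s.card ≤ (s.biUnion t).card := by
    intro s
    let S : Finset (Clause D) := s.image Subtype.val
    have hSc : S.card = s.card := Finset.card_image_of_injective _ Subtype.val_injective
    have hSF : S ⊆ F \ G := by
      intro C hC
      obtain ⟨x, -, rfl⟩ := Finset.mem_image.mp hC
      exact x.2
    have hsub : (S.sup FinFn.vars \ U).sigma (fun v => Finset.range ((D v).card - 1))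
        ⊆ s.biUnion t := by
      rintro ⟨v, k⟩ hvk
      rw [Finset.mem_sigma, Finset.mem_sdiff, Finset.mem_sup] at hvk
      obtain ⟨⟨⟨C, hC, hv⟩, hU⟩, hk⟩ := hvk
      obtain ⟨x, hx, rfl⟩ := Finset.mem_image.mp hC
      exact Finset.mem_biUnion.mpr ⟨x, hx,
        Finset.mem_sigma.mpr ⟨Finset.mem_sdiff.mpr ⟨hv, hU⟩, hk⟩⟩
    have hle := Finset.card_le_card hsub
    rw [Finset.card_sigma] at hle
    have hd := hmax (G ∪ S) (Finset.union_subset hG (hSF.trans Finset.sdiff_subset))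
    have hdisj : Disjoint G S :=
      Finset.disjoint_left.mpr fun C hC hC' => (Finset.mem_sdiff.mp (hSF hC')).2 hC
    have hv : mvars (G ∪ S).val = U ∪ (S.sup FinFn.vars \ U) := by
      show _ = mvars G.val ∪ (S.sup FinFn.vars \ mvars G.val)
      rw [mvars_val, mvars_val, Finset.sup_union, Finset.union_sdiff_self_eq_union]
      rfl
    unfold delta at hd
    rw [hv, Finset.sum_union Finset.disjoint_sdiff] at hd
    simp only [Finset.card_val] at hd
    rw [Finset.card_union_of_disjoint hdisj] at hd
    have hcast : ((∑ v ∈ S.sup FinFn.vars \ U, (Finset.range ((D v).card - 1)).card : ℕ) : ℤ)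
        = ∑ v ∈ S.sup FinFn.vars \ U, ((D v).card - 1 : ℤ) := by
      rw [Nat.cast_sum]
      refine Finset.sum_congr rfl fun v _ => ?_
      have := (hD v).card_pos
      rw [Finset.card_range]
      omega
    have hUU : U = mvars G.val := rfl
    rw [← hcast, hUU] at hd
    rw [hUU] at hle
    push_cast at hd
    rw [← hSc]
    zify at hle ⊢
    push_cast at hle
    linarith
  obtain ⟨f, finj, hf⟩ := (Finset.all_card_le_biUnion_card_iff_exists_injective t).mp hall
  have hf' : ∀ C, ∃ ε, ((f C).1, ε) ∈ C.1.1 ∧ (f C).1 ∉ U ∧ (f C).2 < (D (f C).1).card - 1 := by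
    intro C
    have := hf C
    rw [Finset.mem_sigma, Finset.mem_sdiff, Finset.mem_range] at this
    obtain ⟨⟨h1, h2⟩, h3⟩ := this
    obtain ⟨⟨v, ε⟩, hl, hv⟩ := Finset.mem_image.mp h1
    simp only at hv
    subst hv
    exact ⟨ε, hl, h2, h3⟩
  choose e he1 he2 he3 using hf'
  have hg : ∀ v, ∃ a ∈ D v, ∀ C, (f C).1 = v → a ≠ e C := by
    intro v
    let A := Finset.univ.filter (fun C => (f C).1 = v)
    have hA : A.card ≤ (D v).card - 1 := by
      rw [← Finset.card_range ((D v).card - 1)]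
      refine Finset.card_le_card_of_injOn (fun C => (f C).2) ?_ ?_
      · intro C hC
        have hC' : (f C).1 = v := (Finset.mem_filter.mp hC).2
        have := he3 C
        rw [hC'] at this
        exact Finset.mem_coe.mpr (Finset.mem_range.mpr this)
      · intro C hC C' hC' heq
        have h1 : (f C).1 = v := (Finset.mem_filter.mp hC).2
        have h2 : (f C').1 = v := (Finset.mem_filter.mp hC').2
        exact finj (Sigma.ext (h1.trans h2.symm) (heq_of_eq heq))
    have hlt : (A.image e).card < (D v).card := by
      have := (hD v).card_pos
      have := Finset.card_image_le (s := A) (f := e)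
      omega
    obtain ⟨a, ha, hna⟩ := Finset.exists_mem_notMem_of_card_lt_card hlt
    refine ⟨a, ha, fun C hC hae => hna ?_⟩
    exact Finset.mem_image.mpr ⟨C, Finset.mem_filter.mpr ⟨Finset.mem_univ _, hC⟩, hae.symm⟩
  choose g hg1 hg2 using hg
  refine ⟨fun v => if v ∈ U then h v else g v, ?_, ?_⟩
  · intro v
    dsimp only
    split_ifs
    · exact hh v
    · exact hg1 v
  · intro C hC
    by_cases hCG : C ∈ G
    · obtain ⟨l, hl, hne⟩ := hsat C hCG
      refine ⟨l, hl, ?_⟩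
      have : l.1 ∈ U := by
        show l.1 ∈ mvars G.val
        rw [mvars_val]
        exact Finset.mem_sup.mpr ⟨C, hCG, Finset.mem_image_of_mem _ hl⟩
      simp only [this, if_true]
      exact hne
    · let x : {C // C ∈ F \ G} := ⟨C, Finset.mem_sdiff.mpr ⟨hC, hCG⟩⟩
      refine ⟨((f x).1, e x), he1 x, ?_⟩
      simp only [he2 x, if_false]
      exact hg2 _ x rfl

/-- generalised Tarsi's Lemma: a minimally unsatisfiable
generalised clause-set satisfies `δ*(F) = δ(F) ≥ 1`. -/
theorem tarsi_lemma
    (hD : ∀ v, (D v).Nonempty) (F : Finset (Clause D)) (hmu : MinUnsat F) :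
    deltaStar F.val = delta F.val ∧ 1 ≤ delta F.val := by
  have hne : ∀ M ≤ F.val, (∀ H, H ⊆ F → delta H.val ≤ delta M) → M = F.val := by
    intro M hM hmax
    let G : Finset (Clause D) := ⟨M, Multiset.nodup_of_le hM F.nodup⟩
    have hGF : G ⊆ F := Finset.val_le_iff.mp hM
    by_contra hMF
    have hGne : G ≠ F := fun hh => hMF (congrArg Finset.val hh)
    exact hmu.1 (hall_step hD F G hGF hmax (hmu.2 G (Finset.ssubset_iff_subset_ne.mpr ⟨hGF, hGne⟩)))
  have hle : ∀ H, H ⊆ F → delta H.val ≤ deltaStar F.val := by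
    intro H hH
    refine Finset.le_sup' delta ?_
    rw [Multiset.mem_toFinset, Multiset.mem_powerset]
    exact Finset.val_le_iff.mpr hH
  obtain ⟨M, hM, hMeq⟩ := Finset.exists_mem_eq_sup' (powerset_toFinset_nonempty F.val) delta
  rw [Multiset.mem_toFinset, Multiset.mem_powerset] at hM
  have hMs : deltaStar F.val = delta M := hMeq
  have hMF := hne M hM (fun H hH => hMs ▸ hle H hH)
  subst hMF
  refine ⟨hMs, ?_⟩
  by_contra hlt
  have h0 : delta (0 : Multiset (Clause D)) = 0 := by simp [delta, mvars]
  have hF0 := hne 0 (Multiset.zero_le _) (fun H hH => by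
    have := hle H hH
    omega)
  apply hmu.1
  rw [← hF0]
  exact ⟨⟨∅, by simp, by simp⟩, by simp [applyM]⟩

end GCLS
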